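/- arXiv:1410.1103 — 11 statements merged into one kernel-verified Lean document; each statement's English description precedes it below -/
import Mathlib

section
/- For every number of objects m ≥ 1, every pair of rankings σ, σ' of the m objects, and every binary relevance vector r ∈ {0,1}^m, the difference of pairwise losses equals the difference of sum losses: PL(σ,r) − PL(σ',r) = SumLoss(σ,r) − SumLoss(σ',r). (Equivalently, SumLoss(σ,r) − PL(σ,r) is a quantity depending only on r, not on σ.) -/
/-- SumLoss(σ,r) = Σ_i σ(i)·r(i), where the rank of object `i` is `(σ i : ℕ) + 1`
(ranks run from 1 to m) and `r i : Bool` is its binary relevance. -/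
noncomputable def sumLoss {m : ℕ} (σ : Equiv.Perm (Fin m)) (r : Fin m → Bool) : ℝ :=
  ∑ i, (((σ i : ℕ) : ℝ) + 1) * (if r i then 1 else 0)

/-- PairwiseLoss(σ,r) = Σ_i Σ_j 𝟙(σ(i)<σ(j))·𝟙(r(i)<r(j)). -/
noncomputable def pairwiseLoss {m : ℕ} (σ : Equiv.Perm (Fin m)) (r : Fin m → Bool) : ℝ :=
  ∑ i, ∑ j, if σ i < σ j ∧ r i = false ∧ r j = true then (1 : ℝ) else 0

/-!
On positions rather than objects: let `S` be the set of ranks that `σ` gives to the relevant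
objects. Since the rank of a position counts the positions up to it, `SumLoss` counts the pairs
`y ≤ x` with `x ∈ S`. Those with `y ∉ S` are counted by `PairwiseLoss`, and those with `y ∈ S` are
`k (k + 1) / 2` in number, where `k = #S` is the number of relevant objects, whatever `σ` is.
-/

section

open Finset

theorem sum_card_filter_le {α : Type*} [LinearOrder α] (s : Finset α) :
    ∑ x ∈ s, #{y ∈ s | y ≤ x} = (#s + 1).choose 2 := by
  induction s using Finset.induction_on_max with
  | empty => simp
  | insert a s lt_a ih =>
    have a_notMem : a ∉ s := fun ha => (lt_a a ha).false
    have count_max : #{y ∈ insert a s | y ≤ a} = #s + 1 := by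
      rw [filter_true_of_mem (by simpa using fun y hy => (lt_a y hy).le),
        card_insert_of_notMem a_notMem]
    have count_lower : ∀ x ∈ s, #{y ∈ insert a s | y ≤ x} = #{y ∈ s | y ≤ x} := fun x hx => by
      rw [filter_insert, if_neg (lt_a x hx).not_ge]
    rw [sum_insert a_notMem, count_max, sum_congr rfl count_lower, ih,
      card_insert_of_notMem a_notMem, Nat.choose_succ_succ' (#s + 1) 1, Nat.choose_one_right]

theorem sum_card_Iic_eq_sum_card_Iio_sdiff_add_choose {α : Type*} [LinearOrder α]
    [LocallyFiniteOrderBot α] (s : Finset α) :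
    ∑ x ∈ s, #(Iic x) = ∑ x ∈ s, #(Iio x \ s) + (#s + 1).choose 2 := by
  rw [← sum_card_filter_le, ← sum_add_distrib]
  refine sum_congr rfl fun x hx => ?_
  have sdiff_eq : Iic x \ s = Iio x \ s := by
    rw [← Iio_insert, insert_sdiff_of_mem _ hx]
  have inter_eq : Iic x ∩ s = {y ∈ s | y ≤ x} := by
    ext y
    simp [and_comm]
  rw [← card_sdiff_add_card_inter (Iic x) s, sdiff_eq, inter_eq]

variable {m : ℕ} (σ : Equiv.Perm (Fin m)) (r : Fin m → Bool)

/-- The set of positions that the ranking `σ` gives to the relevant objects. Positions are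
counted from `0`, as in `Fin m`. -/
def relevantRanks : Finset (Fin m) :=
  ({i | r i} : Finset (Fin m)).map σ.toEmbedding

theorem apply_mem_relevantRanks (i : Fin m) : σ i ∈ relevantRanks σ r ↔ r i = true := by
  simp [relevantRanks]

theorem card_relevantRanks : #(relevantRanks σ r) = #{i | r i} :=
  card_map _

theorem sum_relevantRanks {M : Type*} [AddCommMonoid M] (f : Fin m → M) :
    ∑ x ∈ relevantRanks σ r, f x = ∑ i, if r i then f (σ i) else 0 := by
  rw [relevantRanks, sum_map, sum_filter]
  rfl

theorem sumLoss_eq_sum_card_Iic :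
    sumLoss σ r = ∑ x ∈ relevantRanks σ r, (#(Iic x) : ℝ) := by
  simp [sumLoss, sum_relevantRanks]

theorem card_Iio_sdiff_relevantRanks (j : Fin m) :
    #(Iio (σ j) \ relevantRanks σ r) = #{i | σ i < σ j ∧ r i = false} := by
  have eq_map : Iio (σ j) \ relevantRanks σ r =
      ({i | σ i < σ j ∧ r i = false} : Finset (Fin m)).map σ.toEmbedding := by
    ext x
    obtain ⟨i, rfl⟩ := σ.surjective x
    simp [apply_mem_relevantRanks]
  rw [eq_map, card_map]

theorem pairwiseLoss_eq_sum_card_Iio_sdiff :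
    pairwiseLoss σ r = ∑ x ∈ relevantRanks σ r, (#(Iio x \ relevantRanks σ r) : ℝ) := by
  rw [pairwiseLoss, sum_comm, sum_relevantRanks]
  refine sum_congr rfl fun j _ => ?_
  rw [card_Iio_sdiff_relevantRanks]
  cases r j <;> simp

theorem sumLoss_eq_pairwiseLoss_add_choose :
    sumLoss σ r = pairwiseLoss σ r + ((#{i | r i} + 1).choose 2 : ℕ) := by
  rw [sumLoss_eq_sum_card_Iic, pairwiseLoss_eq_sum_card_Iio_sdiff, ← card_relevantRanks σ r]
  exact_mod_cast sum_card_Iic_eq_sum_card_Iio_sdiff_add_choose (relevantRanks σ r)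

end

theorem pl_diff_eq_sumLoss_diff (m : ℕ) (hm : 1 ≤ m)
    (σ σ' : Equiv.Perm (Fin m)) (r : Fin m → Bool) :
    pairwiseLoss σ r - pairwiseLoss σ' r = sumLoss σ r - sumLoss σ' r := by
  rw [sumLoss_eq_pairwiseLoss_add_choose σ r, sumLoss_eq_pairwiseLoss_add_choose σ' r,
    add_sub_add_right_eq_sub]
end

section
/- (Global observability for SumLoss.) For every m ≥ 1 and every pair of rankings σ_a, σ_b of m objects, the loss-difference vector, i.e., the function r ↦ SumLoss(σ_a,r) − SumLoss(σ_b,r) on {0,1}^m, lies in the ℝ-linear span of the family {χ_{j,b} : j ∈ {1,…,m}, b ∈ {0,1}}. In fact, for every ranking σ_a the function r ↦ SumLoss(σ_a,r) itself lies in this span, since it equals Σ_{j=1}^m j · χ_{σ_a^{-1}(j),1}. -/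
/-- χ_{j,b}(r) = 𝟙(r(j)=b), a column of a transposed signal matrix under top-1 feedback. -/
noncomputable def chi {m : ℕ} (j : Fin m) (b : Bool) : (Fin m → Bool) → ℝ :=
  fun r => if r j = b then 1 else 0

section SumLoss

variable {m : ℕ} (σ : Equiv.Perm (Fin m))

theorem sumLoss_eq_sum_smul_chi :
    sumLoss σ = ∑ i, (((σ i : ℕ) : ℝ) + 1) • chi i true := by
  funext r
  simp only [sumLoss, chi, Finset.sum_apply, Pi.smul_apply, smul_eq_mul]

theorem sumLoss_eq_sum_smul_chi_symm :
    sumLoss σ = ∑ j : Fin m, (((j : ℕ) : ℝ) + 1) • chi (σ.symm j) true := by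
  rw [sumLoss_eq_sum_smul_chi]
  exact Fintype.sum_equiv σ _ _ fun i => by rw [σ.symm_apply_apply]

theorem sumLoss_mem_span_range_chi_true :
    sumLoss σ ∈ Submodule.span ℝ (Set.range fun j : Fin m => chi j true) :=
  (Submodule.mem_span_range_iff_exists_fun ℝ).2 ⟨_, (sumLoss_eq_sum_smul_chi σ).symm⟩

end SumLoss

/-- Global observability for SumLoss: every loss-difference vector lies in the span of the
columns of the transposed signal matrices; in fact each loss vector itself does, since
`r ↦ SumLoss(σ,r)` equals `Σ_{j=1}^m j · χ_{σ⁻¹(j),1}`. -/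
theorem sumLoss_global_observability (m : ℕ) (hm : 1 ≤ m) (σa σb : Equiv.Perm (Fin m)) :
    ((fun r => sumLoss σa r - sumLoss σb r) ∈
        Submodule.span ℝ (Set.range fun p : Fin m × Bool => chi p.1 p.2)) ∧
      (∀ σ : Equiv.Perm (Fin m),
        (fun r => sumLoss σ r) =
            (∑ j : Fin m, (((j : ℕ) : ℝ) + 1) • chi (σ.symm j) true) ∧
          (fun r => sumLoss σ r) ∈
            Submodule.span ℝ (Set.range fun p : Fin m × Bool => chi p.1 p.2)) := by
  have range_chi_true_subset : (Set.range fun j : Fin m => chi j true) ⊆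
      Set.range fun p : Fin m × Bool => chi p.1 p.2 :=
    Set.range_subset_iff.2 fun j => ⟨(j, true), rfl⟩
  have sumLoss_mem (σ : Equiv.Perm (Fin m)) :
      sumLoss σ ∈ Submodule.span ℝ (Set.range fun p : Fin m × Bool => chi p.1 p.2) :=
    Submodule.span_mono range_chi_true_subset (sumLoss_mem_span_range_chi_true σ)
  exact ⟨Submodule.sub_mem _ (sumLoss_mem σa) (sumLoss_mem σb),
    fun σ => ⟨sumLoss_eq_sum_smul_chi_symm σ, sumLoss_mem σ⟩⟩
end

section
/- (Characterization of optimal actions for SumLoss.) For every m ≥ 1, every distribution p ∈ Δ over {0,1}^m, and every ranking σ of m objects: σ is optimal under p, i.e., Σ_r p(r)·SumLoss(σ,r) ≤ Σ_r p(r)·SumLoss(σ',r) for every ranking σ', if and only if the expected relevances read off in rank order are nonincreasing: E_p[r(σ^{-1}(1))] ≥ E_p[r(σ^{-1}(2))] ≥ … ≥ E_p[r(σ^{-1}(m))]. -/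
/-!
Expected SumLoss is the pairing `∑ i, (rank of i) * E_p[r i]`, so minimizing it over rankings is a
rearrangement problem. The minimizers are the rankings that antivary with the expected relevance:
the rearrangement inequality gives one direction, and a pair of objects in the wrong order can be
swapped to lower the loss strictly. Antivarying with the expected relevance means being sorted by it.
-/

section Rearrangement

variable {ι α β : Type*} [Fintype ι]

theorem sum_le_sum_swap_iff [DecidableEq ι] [AddCommMonoid β] [Preorder β]
    [IsOrderedCancelAddMonoid β] (F : ι → ι → β) (i j : ι) :
    ∑ x, F x x ≤ ∑ x, F (Equiv.swap i j x) x ↔ F i i + F j j ≤ F j i + F i j := by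
  rcases eq_or_ne i j with rfl | hij
  · simp
  have sum_off_pair :
      ∑ x ∈ {i, j}ᶜ, F (Equiv.swap i j x) x = ∑ x ∈ {i, j}ᶜ, F x x := by
    refine Finset.sum_congr rfl fun x hx => ?_
    simp only [Finset.mem_compl, Finset.mem_insert, Finset.mem_singleton, not_or] at hx
    rw [Equiv.swap_apply_of_ne_of_ne hx.1 hx.2]
  rw [← Finset.sum_add_sum_compl {i, j} fun x => F x x,
    ← Finset.sum_add_sum_compl {i, j} fun x => F (Equiv.swap i j x) x, sum_off_pair,
    add_le_add_iff_right, Finset.sum_pair hij, Finset.sum_pair hij, Equiv.swap_apply_left,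
    Equiv.swap_apply_right]

theorem antivary_iff_forall_sum_smul_le_sum_comp_perm_smul
    [Semiring α] [LinearOrder α] [IsStrictOrderedRing α] [ExistsAddOfLE α]
    [AddCommMonoid β] [LinearOrder β] [IsOrderedCancelAddMonoid β] [Module α β]
    [PosSMulStrictMono α β] {f : ι → α} {g : ι → β} :
    Antivary f g ↔ ∀ τ : Equiv.Perm ι, ∑ i, f i • g i ≤ ∑ i, f (τ i) • g i := by
  classical
  refine ⟨fun h _ => h.sum_smul_le_sum_comp_perm_smul, fun h i j hg => ?_⟩
  by_contra! hf
  have swap_le : f i • g i + f j • g j ≤ f j • g i + f i • g j :=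
    (sum_le_sum_swap_iff (fun x y => f x • g y) i j).1 (h (Equiv.swap i j))
  have swap_lt : f i • g j + f j • g i < f i • g i + f j • g j :=
    smul_add_smul_lt_smul_add_smul hf hg
  exact swap_lt.not_ge (swap_le.trans_eq (add_comm _ _))

end Rearrangement

theorem antivary_comp_equiv_iff_antitone_comp_symm {ι κ α β : Type*} [LinearOrder κ]
    [Preorder α] [Preorder β] {f : κ → α} (hf : StrictMono f) (e : ι ≃ κ) {g : ι → β} :
    Antivary g (f ∘ e) ↔ Antitone (g ∘ e.symm) := by
  constructor
  · intro h
    have antivary_reindexed : Antivary (g ∘ e.symm) f := by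
      simpa only [Function.comp_assoc, Equiv.self_comp_symm, Function.comp_id]
        using h.comp_right e.symm
    exact hf.trans_antivary antivary_reindexed
  · intro h
    simpa only [Function.comp_assoc, Equiv.symm_comp_self, Function.comp_id]
      using (h.antivary hf.monotone).comp_right e

section SumLoss

variable {m : ℕ} (p : (Fin m → Bool) → ℝ)

/-- The expected relevance `E_p[r(i)]` of object `i`. The weights `p` may be arbitrary reals, in
which case this is the corresponding weighted sum. -/
noncomputable def expectedRelevance (i : Fin m) : ℝ :=
  ∑ r, p r * (if r i then 1 else 0)

theorem sum_mul_sumLoss (σ : Equiv.Perm (Fin m)) :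
    ∑ r, p r * sumLoss σ r = ∑ i, (((σ i : ℕ) : ℝ) + 1) * expectedRelevance p i := by
  simp only [sumLoss, expectedRelevance, Finset.mul_sum, mul_left_comm (p _)]
  exact Finset.sum_comm

theorem forall_sum_mul_sumLoss_le_iff_antivary (σ : Equiv.Perm (Fin m)) :
    (∀ σ' : Equiv.Perm (Fin m), ∑ r, p r * sumLoss σ r ≤ ∑ r, p r * sumLoss σ' r) ↔
      Antivary (fun i => ((σ i : ℕ) : ℝ) + 1) (expectedRelevance p) := by
  rw [antivary_iff_forall_sum_smul_le_sum_comp_perm_smul, ← (Equiv.mulLeft σ).forall_congr_right]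
  simp only [sum_mul_sumLoss, Equiv.coe_mulLeft, Equiv.Perm.mul_apply, smul_eq_mul]

end SumLoss

theorem sumLoss_optimal_iff_sorted_general (m : ℕ) (p : (Fin m → Bool) → ℝ)
    (σ : Equiv.Perm (Fin m)) :
    (∀ σ' : Equiv.Perm (Fin m),
        ∑ r, p r * sumLoss σ r ≤ ∑ r, p r * sumLoss σ' r) ↔
      (∀ j k : Fin m, j ≤ k →
        (∑ r, p r * (if r (σ.symm k) then 1 else 0)) ≤
          ∑ r, p r * (if r (σ.symm j) then 1 else 0)) := by
  have rank_strictMono : StrictMono fun j : Fin m => ((j : ℕ) : ℝ) + 1 :=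
    (Nat.strictMono_cast.comp Fin.val_strictMono).add_const 1
  exact (forall_sum_mul_sumLoss_le_iff_antivary p σ).trans <| antivary_comm.trans <|
    antivary_comp_equiv_iff_antitone_comp_symm rank_strictMono σ

/-- A ranking σ has minimal expected SumLoss under a distribution p on {0,1}^m iff the
expected relevances read off in rank order (σ⁻¹(1), σ⁻¹(2), …, σ⁻¹(m)) are nonincreasing. -/
theorem sumLoss_optimal_iff_sorted (m : ℕ) (hm : 1 ≤ m)
    (p : (Fin m → Bool) → ℝ) (hp : ∀ r, 0 ≤ p r) (hsum : ∑ r, p r = 1)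
    (σ : Equiv.Perm (Fin m)) :
    (∀ σ' : Equiv.Perm (Fin m),
        ∑ r, p r * sumLoss σ r ≤ ∑ r, p r * sumLoss σ' r) ↔
      (∀ j k : Fin m, j ≤ k →
        (∑ r, p r * (if r (σ.symm k) then 1 else 0)) ≤
          ∑ r, p r * (if r (σ.symm j) then 1 else 0)) :=
  sumLoss_optimal_iff_sorted_general m p σ
end

section
/- (Every action is Pareto-optimal for SumLoss.) For every m ≥ 1 and every ranking σ of m objects, the cell C_σ is nonempty and is a (2^m − 1)-dimensional polytope: the affine span of C_σ (as a subset of ℝ^{2^m}, functions from {0,1}^m to ℝ) is exactly the affine hyperplane {p : {0,1}^m → ℝ | Σ_r p(r) = 1}. -/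
/-- The cell `C_σ`: distributions in the probability simplex over {0,1}^m under which the
ranking σ has minimal expected SumLoss among all rankings. -/
def cell {m : ℕ} (σ : Equiv.Perm (Fin m)) : Set ((Fin m → Bool) → ℝ) :=
  {p | (∀ r, 0 ≤ p r) ∧ (∑ r, p r = 1) ∧
    ∀ σ' : Equiv.Perm (Fin m), ∑ r, p r * sumLoss σ r ≤ ∑ r, p r * sumLoss σ' r}

/-!
The losses `sumLoss σ`, viewed as vectors indexed by relevance vectors, are rearrangements of one
another, so they all have the same coordinate sum and the same Euclidean norm. Expanding
`‖x - y‖² > 0` then shows that `x = sumLoss σ` has strictly smaller inner product with every other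
loss vector `y` than with itself; hence a distribution proportional to `A - x`, with `A` a large
constant, makes every other loss vector strictly worse than that of `σ`. Positivity and the strict
inequalities are stable under small perturbations, so the cell contains a neighbourhood of this
distribution in the hyperplane `∑ r, p r = 1`, and therefore spans it.
-/

open Filter Topology

section DotProduct

variable {ι 𝕜 : Type*} [Fintype ι]

theorem dotProduct_lt_dotProduct_self [CommRing 𝕜] [LinearOrder 𝕜] [IsStrictOrderedRing 𝕜]
    {x y : ι → 𝕜} (hne : y ≠ x) (hle : y ⬝ᵥ y ≤ x ⬝ᵥ x) : x ⬝ᵥ y < x ⬝ᵥ x := by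
  have hpos : 0 < (x - y) ⬝ᵥ (x - y) :=
    (Finset.sum_nonneg fun i _ ↦ mul_self_nonneg ((x - y) i)).lt_of_ne'
      (mt dotProduct_self_eq_zero.mp (sub_ne_zero.mpr hne.symm))
  have hexpand : (x - y) ⬝ᵥ (x - y) = x ⬝ᵥ x + y ⬝ᵥ y - 2 * (x ⬝ᵥ y) := by
    simp only [sub_dotProduct, dotProduct_sub, dotProduct_comm y x]
    ring
  linarith

theorem exists_pos_forall_dotProduct_lt [Nonempty ι] [Field 𝕜] [LinearOrder 𝕜]
    [IsStrictOrderedRing 𝕜] (x : ι → 𝕜) :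
    ∃ p : ι → 𝕜, (∀ i, 0 < p i) ∧ ∑ i, p i = 1 ∧
      ∀ y, y ≠ x → ∑ i, y i = ∑ i, x i → y ⬝ᵥ y ≤ x ⬝ᵥ x → p ⬝ᵥ x < p ⬝ᵥ y := by
  obtain ⟨M, hM⟩ := (Set.finite_range x).bddAbove
  let w : ι → 𝕜 := fun i ↦ M + 1 - x i
  have hw : ∀ i, 0 < w i := fun i ↦ by
    have := hM (Set.mem_range_self i)
    simp only [w]
    linarith
  have hwsum : 0 < ∑ i, w i := Finset.sum_pos (fun i _ ↦ hw i) Finset.univ_nonempty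
  have hdot (z : ι → 𝕜) : w ⬝ᵥ z = (M + 1) * ∑ i, z i - x ⬝ᵥ z := by
    simp only [w, dotProduct, sub_mul, Finset.sum_sub_distrib, Finset.mul_sum]
  refine ⟨(∑ i, w i)⁻¹ • w, fun i ↦ mul_pos (inv_pos.mpr hwsum) (hw i), ?_,
    fun y hne hsum hle ↦ ?_⟩
  · simp only [Pi.smul_apply, ← Finset.smul_sum]
    exact inv_mul_cancel₀ hwsum.ne'
  · simp only [smul_dotProduct]
    refine smul_lt_smul_of_pos_left ?_ (inv_pos.mpr hwsum)
    rw [hdot, hdot, hsum]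
    exact sub_lt_sub_left (dotProduct_lt_dotProduct_self hne hle) _

end DotProduct

theorem affineSpan_eq_of_mem_nhdsWithin {𝕜 V P : Type*} [NontriviallyNormedField 𝕜]
    [AddCommGroup V] [TopologicalSpace V] [Module 𝕜 V] [ContinuousSMul 𝕜 V]
    [TopologicalSpace P] [AddTorsor V P] [IsTopologicalAddTorsor P]
    {s : Set P} {S : AffineSubspace 𝕜 P} {p : P} (hsS : s ⊆ S) (hp : p ∈ S)
    (hs : s ∈ 𝓝[S] p) : affineSpan 𝕜 s = S := by
  refine le_antisymm (affineSpan_le.mpr hsS) fun q hq ↦ ?_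
  have hline : Tendsto (AffineMap.lineMap p q : 𝕜 → P) (𝓝[≠] 0) (𝓝[S] p) := by
    refine tendsto_nhdsWithin_iff.mpr
      ⟨?_, .of_forall fun t ↦ AffineMap.lineMap_mem t hp hq⟩
    simpa using (AffineMap.lineMap_continuous (p := p) (q := q)).continuousAt.tendsto.mono_left
      (nhdsWithin_le_nhds (a := (0 : 𝕜)))
  obtain ⟨t, hts, ht : t ≠ 0⟩ :=
    ((hline.eventually_mem hs).and self_mem_nhdsWithin).exists
  have hps : p ∈ s := mem_of_mem_nhdsWithin hp hs
  have hq_eq : AffineMap.lineMap p (AffineMap.lineMap p q t) t⁻¹ = q := by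
    simp [AffineMap.lineMap_apply, smul_smul, ht]
  rw [← hq_eq]
  exact AffineMap.lineMap_mem _ (subset_affineSpan 𝕜 s hps) (subset_affineSpan 𝕜 s hts)

section OptimalCell

variable {α ι : Type*} [Fintype ι]

/-- The affine hyperplane of functions with total mass `1`, in which the probability simplex
lies. -/
def massOneSubspace (ι : Type*) [Fintype ι] : AffineSubspace ℝ (ι → ℝ) :=
  (affineSpan ℝ {1}).comap (∑ i, LinearMap.proj i : (ι → ℝ) →ₗ[ℝ] ℝ).toAffineMap

theorem mem_massOneSubspace {p : ι → ℝ} : p ∈ massOneSubspace ι ↔ ∑ i, p i = 1 := by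
  simp [massOneSubspace]

/-- The cell of an action `a` for an arbitrary loss `L`: the distributions over the outcomes `ι`
under which `a` has minimal expected loss. The loss vector of an action is a function of the
outcome, so that expected losses are dot products. -/
def optimalCell (L : α → ι → ℝ) (a : α) : Set (ι → ℝ) :=
  {p | p ∈ stdSimplex ℝ ι ∧ ∀ b, p ⬝ᵥ L a ≤ p ⬝ᵥ L b}

theorem optimalCell_mem_nhdsWithin [Finite α] {L : α → ι → ℝ} {a : α} {p : ι → ℝ}
    (hpos : ∀ i, 0 < p i) (hlt : ∀ b, L b ≠ L a → p ⬝ᵥ L a < p ⬝ᵥ L b) :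
    optimalCell L a ∈ 𝓝[massOneSubspace ι] p := by
  have hnonneg : ∀ᶠ q in 𝓝 p, ∀ i, 0 ≤ q i := eventually_all.mpr fun i ↦
    ((continuousAt_apply i p).eventually_const_lt (hpos i)).mono fun _ ↦ le_of_lt
  have hopt : ∀ᶠ q in 𝓝 p, ∀ b, q ⬝ᵥ L a ≤ q ⬝ᵥ L b := by
    refine eventually_all.mpr fun b ↦ ?_
    have hcont (x : ι → ℝ) : ContinuousAt (· ⬝ᵥ x) p :=
      (continuous_id.dotProduct continuous_const).continuousAt
    obtain heq | hne := eq_or_ne (L b) (L a)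
    · simp [heq]
    · exact ((hcont _).eventually_lt (hcont _) (hlt b hne)).mono fun _ ↦ le_of_lt
  filter_upwards [nhdsWithin_le_nhds hnonneg, nhdsWithin_le_nhds hopt, self_mem_nhdsWithin]
    with q hq0 hqopt hq1
  exact ⟨⟨hq0, mem_massOneSubspace.mp hq1⟩, hqopt⟩

theorem affineSpan_optimalCell [Finite α] {L : α → ι → ℝ} {a : α} {p : ι → ℝ}
    (hpos : ∀ i, 0 < p i) (hsum : ∑ i, p i = 1)
    (hlt : ∀ b, L b ≠ L a → p ⬝ᵥ L a < p ⬝ᵥ L b) :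
    affineSpan ℝ (optimalCell L a) = massOneSubspace ι :=
  affineSpan_eq_of_mem_nhdsWithin (fun _ hq ↦ mem_massOneSubspace.mpr hq.1.2)
    (mem_massOneSubspace.mpr hsum) (optimalCell_mem_nhdsWithin hpos hlt)

end OptimalCell

section SumLoss

variable {m : ℕ}

theorem cell_eq_optimalCell (σ : Equiv.Perm (Fin m)) : cell σ = optimalCell sumLoss σ :=
  Set.ext fun _ ↦ and_assoc.symm

theorem sumLoss_eq_sumLoss_one_comp (σ : Equiv.Perm (Fin m)) (r : Fin m → Bool) :
    sumLoss σ r = sumLoss 1 (r ∘ σ.symm) := by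
  simpa [sumLoss] using
    Equiv.sum_comp σ fun j ↦ (((j : ℕ) : ℝ) + 1) * (if r (σ.symm j) then 1 else 0)

theorem sum_comp_sumLoss_eq {M : Type*} [AddCommMonoid M] (f : ℝ → M)
    (σ τ : Equiv.Perm (Fin m)) : ∑ r, f (sumLoss σ r) = ∑ r, f (sumLoss τ r) := by
  have hone (ρ : Equiv.Perm (Fin m)) : ∑ r, f (sumLoss ρ r) =
      ∑ r, f (sumLoss (1 : Equiv.Perm (Fin m)) r) := by
    simp only [sumLoss_eq_sumLoss_one_comp ρ]
    exact Equiv.sum_comp (ρ.arrowCongr (.refl Bool))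
      fun r ↦ f (sumLoss (1 : Equiv.Perm (Fin m)) r)
  rw [hone σ, hone τ]

end SumLoss

/-- Every action is Pareto-optimal for SumLoss: each cell `C_σ` is nonempty and its affine
span is the full hyperplane `{p | Σ_r p(r) = 1}`, i.e. `C_σ` is a `(2^m − 1)`-dimensional
polytope. -/
theorem cell_nonempty_and_affineSpan (m : ℕ) (hm : 1 ≤ m) (σ : Equiv.Perm (Fin m)) :
    (cell σ).Nonempty ∧
      (affineSpan ℝ (cell σ) : Set ((Fin m → Bool) → ℝ)) =
        {p : (Fin m → Bool) → ℝ | ∑ r, p r = 1} := by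
  obtain ⟨p, hpos, hsum, hmin⟩ := exists_pos_forall_dotProduct_lt (sumLoss σ)
  have hlt : ∀ τ, sumLoss τ ≠ sumLoss σ → p ⬝ᵥ sumLoss σ < p ⬝ᵥ sumLoss τ := fun τ hne ↦
    hmin _ hne (sum_comp_sumLoss_eq id τ σ) (sum_comp_sumLoss_eq (fun x ↦ x * x) τ σ).le
  rw [cell_eq_optimalCell]
  constructor
  · exact ⟨p, mem_of_mem_nhdsWithin (mem_massOneSubspace.mpr hsum)
      (optimalCell_mem_nhdsWithin hpos hlt)⟩
  · rw [affineSpan_optimalCell hpos hsum hlt]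
    exact Set.ext fun _ ↦ mem_massOneSubspace
end

section
/- (Neighboring action pairs for SumLoss.) Let m ≥ 2 and let σ_i, σ_j be rankings of m objects such that there exist two distinct objects a, b and a rank k ∈ {1,…,m−1} with σ_i(a) = k, σ_i(b) = k+1, σ_j(a) = k+1, σ_j(b) = k, and σ_i(c) = σ_j(c) for every object c ∉ {a,b}. Then C_{σ_i} ∩ C_{σ_j} is a (2^m − 2)-dimensional polytope; precisely, it is nonempty and its affine span (in ℝ^{2^m}) is the codimension-2 affine subspace {p : {0,1}^m → ℝ | Σ_r p(r) = 1 and Σ_r p(r)·r(a) = Σ_r p(r)·r(b)}. In particular σ_i and σ_j are neighboring actions. -/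
/-!
The expected loss of a ranking is `∑ c, (σ c + 1) * marginal p c`, so by the rearrangement
inequality `p` lies in `C_σ` exactly when the marginal relevances decrease along `σ`. Exchanging
the ranks of `a` and `b` changes the expected loss by a multiple of the difference of their
marginals; hence the two cells meet in the part of `C_σ` on which these marginals are equal. As the
ranks of `a` and `b` are consecutive, this equality makes no other constraint tight: a product of
Bernoulli laws whose parameters decrease along `σ`, apart from the tie between `a` and `b`,
satisfies all the others strictly. It is therefore interior to the intersection relative to the
affine subspace, and a set with a relative interior point spans the whole subspace.
-/

open Equiv Matrix Topology

section AffineSpan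

variable {V P : Type*} [AddCommGroup V] [Module ℝ V] [TopologicalSpace V] [ContinuousSMul ℝ V]
  [AddTorsor V P] [TopologicalSpace P] [IsTopologicalAddTorsor P]

theorem affineSpan_eq_of_mem_nhdsWithin_s4 {A : AffineSubspace ℝ P} {s : Set P} {q : P} (hq : q ∈ A)
    (hsA : s ⊆ A) (hs : s ∈ 𝓝[A] q) : affineSpan ℝ s = A := by
  refine le_antisymm (affineSpan_le.2 hsA) fun p hp ↦ ?_
  have hqs : q ∈ s := mem_of_mem_nhdsWithin hq hs
  have hline : Filter.Tendsto (AffineMap.lineMap q p : ℝ → P) (𝓝[≠] 0) (𝓝[A] q) := by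
    refine tendsto_nhdsWithin_iff.2 ⟨?_, .of_forall fun t ↦ AffineMap.lineMap_mem t hq hp⟩
    have hcont : Continuous (AffineMap.lineMap q p : ℝ → P) := AffineMap.lineMap_continuous
    simpa using (hcont.tendsto 0).mono_left nhdsWithin_le_nhds
  obtain ⟨t, hts, ht⟩ := ((hline.eventually_mem hs).and self_mem_nhdsWithin).exists
  have hp_line : AffineMap.lineMap q (AffineMap.lineMap q p t) t⁻¹ = p := by
    simp [AffineMap.lineMap_apply, smul_smul, inv_mul_cancel₀ ht]
  rw [← hp_line]
  exact AffineMap.lineMap_mem _ (subset_affineSpan ℝ s hqs) (subset_affineSpan ℝ s hts)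

end AffineSpan

section Marginal

variable {ι : Type*} [Fintype ι]

/-- The law of independent Bernoulli relevances with parameters `θ`. It serves to realize a
prescribed family of marginals by a distribution of full support. -/
def bernoulliProduct (θ : ι → ℝ) (r : ι → Bool) : ℝ :=
  ∏ c, if r c then θ c else 1 - θ c

theorem bernoulliProduct_pos {θ : ι → ℝ} (hθ : ∀ c, θ c ∈ Set.Ioo 0 1) (r : ι → Bool) :
    0 < bernoulliProduct θ r :=
  Finset.prod_pos fun c _ ↦ by split_ifs <;> linarith [(hθ c).1, (hθ c).2]

variable [DecidableEq ι]

/-- The expected relevance of the object `c` under the weights `p`, which need not form a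
probability distribution. -/
def marginal (p : (ι → Bool) → ℝ) (c : ι) : ℝ :=
  p ⬝ᵥ fun r ↦ if r c then 1 else 0

theorem continuous_marginal (c : ι) : Continuous fun p ↦ marginal p c :=
  continuous_id.dotProduct continuous_const

/-- The affine subspace of the weights of total mass one under which `a` and `b` have equal
expected relevance. -/
def tieSubspace (a b : ι) : AffineSubspace ℝ ((ι → Bool) → ℝ) where
  carrier := {p | ∑ r, p r = 1 ∧ marginal p a = marginal p b}
  smul_vsub_vadd_mem' := by
    rintro t p q u ⟨hp, hpab⟩ ⟨hq, hqab⟩ ⟨hu, huab⟩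
    simp only [marginal] at hpab hqab huab
    constructor
    · simp [Finset.sum_add_distrib, ← Finset.mul_sum, hp, hq, hu]
    · simp [marginal, add_dotProduct, sub_dotProduct, hpab, hqab, huab]

theorem bernoulliProduct_dotProduct_prod (θ : ι → ℝ) (f : ι → Bool → ℝ) :
    (bernoulliProduct θ ⬝ᵥ fun r ↦ ∏ c, f c (r c)) =
      ∏ c, (θ c * f c true + (1 - θ c) * f c false) := by
  have h := Finset.prod_univ_sum (fun _ : ι ↦ (Finset.univ : Finset Bool))
    fun c x ↦ (if x then θ c else 1 - θ c) * f c x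
  rw [Fintype.piFinset_univ] at h
  simpa [dotProduct, bernoulliProduct, ← Finset.prod_mul_distrib] using h.symm

theorem sum_bernoulliProduct (θ : ι → ℝ) : ∑ r, bernoulliProduct θ r = 1 := by
  simpa [dotProduct] using bernoulliProduct_dotProduct_prod θ fun _ _ ↦ 1

theorem marginal_bernoulliProduct (θ : ι → ℝ) (c : ι) : marginal (bernoulliProduct θ) c = θ c := by
  have h := bernoulliProduct_dotProduct_prod θ fun d x ↦ if d = c then if x then 1 else 0 else 1
  simpa [marginal, apply_ite, Finset.prod_ite_eq'] using h

end Marginal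

section Cell

variable {m : ℕ} {σ : Perm (Fin m)} {p q : (Fin m → Bool) → ℝ} {a b : Fin m}

theorem dotProduct_sumLoss (p : (Fin m → Bool) → ℝ) (σ : Perm (Fin m)) :
    p ⬝ᵥ sumLoss σ = ∑ c, ((σ c : ℕ) + 1 : ℝ) * marginal p c := by
  simp only [dotProduct, sumLoss, marginal, Finset.mul_sum]
  rw [Finset.sum_comm]
  simp only [mul_left_comm]

theorem dotProduct_sumLoss_mul_swap_sub (p : (Fin m → Bool) → ℝ) (σ : Perm (Fin m))
    (a b : Fin m) :
    p ⬝ᵥ sumLoss (σ * swap a b) - p ⬝ᵥ sumLoss σ =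
      ((σ b : ℕ) - (σ a : ℕ) : ℝ) * (marginal p a - marginal p b) := by
  obtain rfl | hab := eq_or_ne a b
  · simp [swap_self, ← Perm.one_def]
  rw [dotProduct_sumLoss, dotProduct_sumLoss, ← Finset.sum_sub_distrib,
    Finset.sum_eq_add_of_mem a b (Finset.mem_univ a) (Finset.mem_univ b) hab]
  · simp only [Perm.mul_apply, swap_apply_left, swap_apply_right]
    ring
  · rintro c - ⟨hca, hcb⟩
    simp [swap_apply_of_ne_of_ne hca hcb]

theorem dotProduct_sumLoss_mul_swap_eq_iff :
    p ⬝ᵥ sumLoss (σ * swap a b) = p ⬝ᵥ sumLoss σ ↔ marginal p a = marginal p b := by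
  rw [← sub_eq_zero, dotProduct_sumLoss_mul_swap_sub, mul_eq_zero, sub_eq_zero, sub_eq_zero]
  refine or_iff_right_of_imp fun hrank ↦ ?_
  rw [σ.injective (Fin.ext (Nat.cast_injective hrank))]

theorem dotProduct_sumLoss_le_of_antivary (h : Antivary (marginal p) σ) (σ' : Perm (Fin m)) :
    p ⬝ᵥ sumLoss σ ≤ p ⬝ᵥ sumLoss σ' := by
  have hrank : Antivary (fun c ↦ ((σ c : ℕ) + 1 : ℝ)) (marginal p) :=
    Antivary.symm fun i j hij ↦ h (by simpa using hij)
  simpa [dotProduct_sumLoss] using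
    hrank.sum_mul_le_sum_comp_perm_mul (σ := σ'.trans σ.symm)

theorem mem_cell_iff :
    p ∈ cell σ ↔ p ∈ stdSimplex ℝ (Fin m → Bool) ∧ Antivary (marginal p) σ := by
  refine ⟨fun ⟨hnonneg, hsum, hmin⟩ ↦ ⟨⟨hnonneg, hsum⟩, fun i j hij ↦ ?_⟩,
    fun ⟨⟨hnonneg, hsum⟩, hanti⟩ ↦ ⟨hnonneg, hsum, dotProduct_sumLoss_le_of_antivary hanti⟩⟩
  have hgap : (0 : ℝ) < (σ j : ℕ) - (σ i : ℕ) := sub_pos.2 (by exact_mod_cast hij)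
  have hswap : 0 ≤ ((σ j : ℕ) - (σ i : ℕ) : ℝ) * (marginal p i - marginal p j) := by
    rw [← dotProduct_sumLoss_mul_swap_sub]
    exact sub_nonneg.2 (hmin _)
  exact sub_nonneg.1 (nonneg_of_mul_nonneg_right hswap hgap)

theorem cell_inter_cell_mul_swap (σ : Perm (Fin m)) (a b : Fin m) :
    cell σ ∩ cell (σ * swap a b) = cell σ ∩ tieSubspace a b := by
  ext p
  refine and_congr_right fun ⟨hnonneg, hsum, hmin⟩ ↦ ⟨fun hp ↦ ?_, fun ⟨_, htie⟩ ↦ ?_⟩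
  · have hloss : p ⬝ᵥ sumLoss (σ * swap a b) = p ⬝ᵥ sumLoss σ :=
      le_antisymm (hp.2.2 σ) (hmin _)
    exact ⟨hsum, dotProduct_sumLoss_mul_swap_eq_iff.1 hloss⟩
  · have hloss : p ⬝ᵥ sumLoss (σ * swap a b) = p ⬝ᵥ sumLoss σ :=
      dotProduct_sumLoss_mul_swap_eq_iff.2 htie
    exact ⟨hnonneg, hsum, fun σ' ↦ hloss.trans_le (hmin σ')⟩

theorem cell_mem_nhdsWithin_tieSubspace (hpos : ∀ r, 0 < q r)
    (hlt : ∀ ⦃i j⦄, σ i < σ j → (i, j) ≠ (a, b) → marginal q j < marginal q i) :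
    cell σ ∈ 𝓝[tieSubspace a b] q := by
  have hpos_near : ∀ᶠ p in 𝓝 q, ∀ r, 0 < p r :=
    Filter.eventually_all.2 fun r ↦ (continuous_apply r).continuousAt.eventually_const_lt (hpos r)
  have hlt_near : ∀ᶠ p in 𝓝 q, ∀ i j, σ i < σ j → (i, j) ≠ (a, b) →
      marginal p j < marginal p i := by
    simp only [Filter.eventually_all]
    exact fun i j hij hne ↦ (continuous_marginal j).continuousAt.eventually_lt
      (continuous_marginal i).continuousAt (hlt hij hne)
  filter_upwards [nhdsWithin_le_nhds hpos_near, nhdsWithin_le_nhds hlt_near, self_mem_nhdsWithin]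
    with p hp hp_lt ⟨hsum, htie⟩
  refine mem_cell_iff.2 ⟨⟨fun r ↦ (hp r).le, hsum⟩, fun i j hij ↦ ?_⟩
  by_cases hne : (i, j) = (a, b)
  · obtain ⟨rfl, rfl⟩ := Prod.mk.inj hne
    exact htie.ge
  · exact (hp_lt i j hij hne).le

theorem exists_pos_mem_tieSubspace (hab : (σ b : ℕ) = σ a + 1) :
    ∃ q ∈ tieSubspace a b, (∀ r, 0 < q r) ∧
      ∀ ⦃i j⦄, σ i < σ j → (i, j) ≠ (a, b) → marginal q j < marginal q i := by
  -- Lowering every rank above that of `a` by one merges the ranks of `a` and `b` and no others.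
  let mergedRank (c : Fin m) : ℕ := if σ a < σ c then σ c - 1 else σ c
  have hmerged_tie : mergedRank a = mergedRank b := by grind
  have hmerged_lt : ∀ ⦃i j⦄, σ i < σ j → (i, j) ≠ (a, b) → mergedRank i < mergedRank j := by
    intro i j hij hne
    have hia : σ i = σ a → i = a := fun h ↦ σ.injective h
    have hjb : σ j = σ b → j = b := fun h ↦ σ.injective h
    grind
  let θ (c : Fin m) : ℝ := 1 / (mergedRank c + 2)
  have hθ (c : Fin m) : θ c ∈ Set.Ioo 0 1 :=
    ⟨by positivity, (div_lt_one (by positivity)).2 (by norm_cast; lia)⟩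
  refine ⟨bernoulliProduct θ, ⟨sum_bernoulliProduct θ, ?_⟩, bernoulliProduct_pos hθ, ?_⟩
  · simp only [marginal_bernoulliProduct, θ, hmerged_tie]
  · intro i j hij hne
    simp only [marginal_bernoulliProduct, θ]
    gcongr
    exact hmerged_lt hij hne

end Cell

/-- Neighboring action pairs for SumLoss: if σi and σj agree except that two objects a, b
occupying consecutive ranks are interchanged (a just before b in σi, b just before a in σj),
then `C_{σi} ∩ C_{σj}` is nonempty and its affine span is the codimension-2 affine subspace
`{p | Σ_r p(r) = 1 and E_p[r(a)] = E_p[r(b)]}`, i.e. it is a `(2^m − 2)`-dimensional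
polytope; in particular σi and σj are neighboring actions. -/
theorem neighboring_pair_cell_inter (m : ℕ) (hm : 2 ≤ m)
    (σi σj : Equiv.Perm (Fin m)) (a b : Fin m) (hab : a ≠ b)
    (hconsec : ((σi b : ℕ)) = (σi a : ℕ) + 1)
    (hja : σj a = σi b) (hjb : σj b = σi a)
    (hsame : ∀ c : Fin m, c ≠ a → c ≠ b → σj c = σi c) :
    (cell σi ∩ cell σj).Nonempty ∧
      (affineSpan ℝ (cell σi ∩ cell σj) : Set ((Fin m → Bool) → ℝ)) =
        {p : (Fin m → Bool) → ℝ | (∑ r, p r = 1) ∧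
          (∑ r, p r * (if r a then 1 else 0)) = ∑ r, p r * (if r b then 1 else 0)} := by
  have hσj : σj = σi * swap a b := by
    ext c
    rw [Perm.mul_apply, swap_apply_def]
    split_ifs with hca hcb
    · rw [hca, hja]
    · rw [hcb, hjb]
    · rw [hsame c hca hcb]
  obtain ⟨q, hq, hpos, hlt⟩ := exists_pos_mem_tieSubspace hconsec
  have hnear : cell σi ∩ tieSubspace a b ∈ 𝓝[tieSubspace a b] q :=
    Filter.inter_mem (cell_mem_nhdsWithin_tieSubspace hpos hlt) self_mem_nhdsWithin
  rw [hσj, cell_inter_cell_mul_swap,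
    affineSpan_eq_of_mem_nhdsWithin_s4 hq Set.inter_subset_right hnear]
  exact ⟨⟨q, mem_of_mem_nhdsWithin hq hnear⟩, rfl⟩
end

section
/- (Local observability fails for DCG at m = 3.) Let m = 3, let σ_1 be the identity ranking and σ_2 the ranking with σ_2(1)=1, σ_2(2)=3, σ_2(3)=2; both place object 1 at the top rank. Define for binary relevance vectors DCG(σ,r) = Σ_{i=1}^3 r(i)/log₂(1+σ(i)). Then the gain-difference function d : {0,1}^3 → ℝ, d(r) = DCG(σ_1,r) − DCG(σ_2,r) = (1/2 − 1/log₂3)·(r(2) − r(3)), does NOT lie in the ℝ-linear span of the two functions r ↦ 𝟙(r(1)=0) and r ↦ 𝟙(r(1)=1). -/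
/-!
Every combination of the two columns depends on `r` only through the relevance of object `j`.
If the gain difference of `σ` and `τ` did so too, it would take at the indicator of each object
`i ≠ j` the value `0` it takes at `r = 0`. That value is the difference of the discounts at `σ i`
and `τ i`, and discounts decrease strictly with the rank, so `σ` and `τ` would agree away from
`j`, hence everywhere.
-/

/-- DCG for binary relevance: DCG(σ,r) = Σ_i r(i)/log₂(1+σ(i)), where the rank of object
`i` is `(σ i : ℕ) + 1`, so `1 + σ(i)` is `(σ i : ℕ) + 2`. -/
noncomputable def dcg {m : ℕ} (σ : Equiv.Perm (Fin m)) (r : Fin m → Bool) : ℝ :=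
  ∑ i, (if r i then (1 : ℝ) else 0) / Real.logb 2 (((σ i : ℕ) : ℝ) + 2)

/-- The factor `1 / log₂ (1 + rank)` by which DCG weights a relevant object, as a function of the
rank counted from `0`, so that `discount 0 = 1`. -/
noncomputable def discount (k : ℕ) : ℝ :=
  (Real.logb 2 ((k : ℝ) + 2))⁻¹

theorem discount_strictAnti : StrictAnti discount := by
  intro k l hkl
  have hk : (2 : ℝ) ≤ k + 2 := le_add_of_nonneg_left k.cast_nonneg
  have hkl' : (k : ℝ) + 2 < l + 2 := by gcongr
  exact inv_strictAnti₀ (Real.logb_pos one_lt_two (one_lt_two.trans_le hk))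
    (Real.logb_lt_logb one_lt_two (two_pos.trans_le hk) hkl')

theorem dcg_eq_sum_discount {m : ℕ} (σ : Equiv.Perm (Fin m)) (r : Fin m → Bool) :
    dcg σ r = ∑ i, if r i then discount (σ i) else 0 := by
  simp only [dcg, discount, ite_div, one_div, zero_div]

theorem dcg_const_false {m : ℕ} (σ : Equiv.Perm (Fin m)) : dcg σ (fun _ => false) = 0 := by
  simp [dcg_eq_sum_discount]

theorem dcg_indicator {m : ℕ} (σ : Equiv.Perm (Fin m)) (i : Fin m) :
    dcg σ (fun k => decide (k = i)) = discount (σ i) := by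
  simp [dcg_eq_sum_discount]

/-- The column `r ↦ 𝟙(r(j) = b)` of the transposed signal matrix, under top-1 feedback, of a
ranking that places object `j` at the top. -/
def signalColumn {ι : Type*} (j : ι) (b : Bool) (r : ι → Bool) : ℝ :=
  if r j = b then 1 else 0

theorem dependsOn_signalColumn {ι : Type*} (j : ι) (b : Bool) :
    DependsOn (signalColumn j b) {j} := by
  intro r s hrs
  simp only [signalColumn, hrs j rfl]

theorem dependsOn_of_mem_span {ι R M : Type*} {α : ι → Type*} [Semiring R] [AddCommMonoid M]
    [Module R M] {s : Set ι} {F : Set ((Π i, α i) → M)} (hF : ∀ f ∈ F, DependsOn f s)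
    {f : (Π i, α i) → M} (hf : f ∈ Submodule.span R F) : DependsOn f s := by
  intro x y hxy
  induction hf using Submodule.span_induction with
  | mem f hf => exact hF f hf hxy
  | zero => rfl
  | add f g _ _ hf hg => exact congrArg₂ (· + ·) hf hg
  | smul c f _ hf => exact congrArg (c • ·) hf

theorem dependsOn_of_mem_span_signalColumn {ι : Type*} {j : ι} {f : (ι → Bool) → ℝ}
    (hf : f ∈ Submodule.span ℝ {signalColumn j false, signalColumn j true}) :
    DependsOn f {j} := by
  refine dependsOn_of_mem_span ?_ hf
  rintro _ (rfl | rfl) <;> exact dependsOn_signalColumn j _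

theorem equiv_eq_of_eqOn_compl_singleton {α β : Type*} {e f : α ≃ β} {a : α}
    (h : Set.EqOn e f {a}ᶜ) : e = f := by
  have fixed : e.symm (f a) = a := by
    by_contra hne
    have hf : f (e.symm (f a)) = f a := by rw [← h hne, e.apply_symm_apply]
    exact hne (f.injective hf)
  ext x
  obtain rfl | hx := eq_or_ne x a
  · exact (e.symm_apply_eq.mp fixed).symm
  · exact h hx

theorem apply_eq_of_dependsOn_dcg_sub {m : ℕ} {σ τ : Equiv.Perm (Fin m)} {s : Set (Fin m)}
    (h : DependsOn (fun r => dcg σ r - dcg τ r) s) {i : Fin m} (hi : i ∉ s) : σ i = τ i := by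
  have agree : ∀ k ∈ s, decide (k = i) = false := fun k hk =>
    decide_eq_false (ne_of_mem_of_not_mem hk hi)
  have hdiff : discount (σ i) - discount (τ i) = 0 := by
    simpa only [dcg_indicator, dcg_const_false, sub_zero] using h agree
  exact Fin.ext (discount_strictAnti.injective (sub_eq_zero.mp hdiff))

theorem dcg_local_observability_fails_general {m : ℕ} (j : Fin m) {σ τ : Equiv.Perm (Fin m)}
    (hne : σ ≠ τ) :
    (fun r => dcg σ r - dcg τ r) ∉
      Submodule.span ℝ {signalColumn j false, signalColumn j true} := by
  intro hmem
  have hdep := dependsOn_of_mem_span_signalColumn hmem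
  exact hne (equiv_eq_of_eqOn_compl_singleton fun _ hi => apply_eq_of_dependsOn_dcg_sub hdep hi)

/-- Local observability fails for DCG at m = 3: for the neighboring pair consisting of the
identity ranking σ₁ = (1,2,3) and σ₂ = (1,3,2) (both placing object 1 at the top; in Lean
σ₂ = `Equiv.swap 1 2` with 0-indexed objects), the gain difference
d(r) = DCG(σ₁,r) − DCG(σ₂,r) does not lie in the span of the two columns
r ↦ 𝟙(r(1)=0), r ↦ 𝟙(r(1)=1) of their common transposed signal matrix. -/
theorem dcg_local_observability_fails :
    (fun r : Fin 3 → Bool => dcg 1 r - dcg (Equiv.swap 1 2) r) ∉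
      Submodule.span ℝ
        ({(fun r : Fin 3 → Bool => if r 0 = false then (1 : ℝ) else 0),
          (fun r : Fin 3 → Bool => if r 0 = true then (1 : ℝ) else 0)} :
          Set ((Fin 3 → Bool) → ℝ)) :=
  dcg_local_observability_fails_general 0 (by decide)
end

section
/- (Global observability for DCG with multi-graded relevance.) Let m ≥ 1 and n ≥ 1, and let relevance vectors take values r ∈ {0,1,…,n}^m. Define DCG(σ,r) = Σ_{i=1}^m (2^{r(i)} − 1)/log₂(1+σ(i)). Then for every pair of rankings σ_a, σ_b of m objects, the function r ↦ DCG(σ_a,r) − DCG(σ_b,r) on {0,…,n}^m lies in the ℝ-linear span of the family {χ_{j,v} : j ∈ {1,…,m}, v ∈ {0,…,n}}, where χ_{j,v}(r) = 𝟙(r(j)=v). -/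
/-- DCG for multi-graded relevance r ∈ {0,…,n}^m:
DCG(σ,r) = Σ_i (2^{r(i)} − 1)/log₂(1+σ(i)), where the rank of object `i` is
`(σ i : ℕ) + 1`, so `1 + σ(i)` is `(σ i : ℕ) + 2`. -/
noncomputable def dcgGraded {m n : ℕ} (σ : Equiv.Perm (Fin m)) (r : Fin m → Fin (n + 1)) :
    ℝ :=
  ∑ i, ((2 : ℝ) ^ (r i : ℕ) - 1) / Real.logb 2 (((σ i : ℕ) : ℝ) + 2)

section IndicatorSpan

variable {R α ι κ : Type*} [Semiring R] [Finite κ] [DecidableEq κ]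

theorem comp_mem_span_range_ite (f : κ → R) (g : α → κ) :
    (fun a => f (g a)) ∈
      Submodule.span R (Set.range fun (v : κ) (a : α) => if g a = v then (1 : R) else 0) := by
  cases nonempty_fintype κ
  have expansion : (fun a => f (g a)) =
      ∑ v, f v • fun a => if g a = v then (1 : R) else 0 := by
    ext a
    simp
  rw [expansion]
  exact Submodule.sum_smul_mem _ f fun v _ => Submodule.subset_span (Set.mem_range_self v)

theorem sum_comp_mem_span_range_ite (s : Finset ι) (f : ι → κ → R) (g : ι → α → κ) :
    (fun a => ∑ i ∈ s, f i (g i a)) ∈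
      Submodule.span R
        (Set.range fun (p : ι × κ) (a : α) => if g p.1 a = p.2 then (1 : R) else 0) := by
  rw [← Finset.sum_fn]
  refine Submodule.sum_mem _ fun i _ =>
    Submodule.span_mono ?_ (comp_mem_span_range_ite (f i) (g i))
  rintro _ ⟨v, rfl⟩
  exact ⟨(i, v), rfl⟩

end IndicatorSpan

theorem dcgGraded_mem_span_range_ite {m n : ℕ} (σ : Equiv.Perm (Fin m)) :
    (fun r : Fin m → Fin (n + 1) => dcgGraded σ r) ∈
      Submodule.span ℝ
        (Set.range fun (p : Fin m × Fin (n + 1)) (r : Fin m → Fin (n + 1)) =>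
          if r p.1 = p.2 then (1 : ℝ) else 0) :=
  sum_comp_mem_span_range_ite Finset.univ
    (fun i (v : Fin (n + 1)) => ((2 : ℝ) ^ (v : ℕ) - 1) / Real.logb 2 (((σ i : ℕ) : ℝ) + 2))
    Function.eval

/-- Global observability for DCG with multi-graded relevance: for every pair of rankings,
the gain-difference function r ↦ DCG(σa,r) − DCG(σb,r) on {0,…,n}^m lies in the ℝ-linear
span of the functions χ_{j,v}(r) = 𝟙(r(j)=v), j ∈ {1,…,m}, v ∈ {0,…,n}. -/
theorem dcg_global_observability (m n : ℕ) (hm : 1 ≤ m) (hn : 1 ≤ n)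
    (σa σb : Equiv.Perm (Fin m)) :
    (fun r : Fin m → Fin (n + 1) => dcgGraded σa r - dcgGraded σb r) ∈
      Submodule.span ℝ
        (Set.range fun p : Fin m × Fin (n + 1) =>
          fun r : Fin m → Fin (n + 1) => if r p.1 = p.2 then (1 : ℝ) else 0) :=
  Submodule.sub_mem _ (dcgGraded_mem_span_range_ite σa) (dcgGraded_mem_span_range_ite σb)
end

section
/- (Global observability fails for NDCG at m = 3.) Let m = 3, let σ_1 be the identity ranking and σ_6 the reversal ranking (σ_6(i) = 4 − i). Then the gain-difference function d : {0,1}^3 → ℝ, d(r) = NDCG(σ_1,r) − NDCG(σ_6,r), does NOT lie in the ℝ-linear span of the family {χ_{j,b} : j ∈ {1,2,3}, b ∈ {0,1}}, where χ_{j,b}(r) = 𝟙(r(j)=b). (Explicitly, d takes the value −1/2 at r=(0,0,1), −log₂3/(2(1+log₂3)) at r=(0,1,1), 1/2 at r=(1,0,0), log₂3/(2(1+log₂3)) at r=(1,1,0), and 0 at the other four relevance vectors.) -/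
/-- The NDCG normalizing factor Z(r) = max_σ DCG(σ,r). -/
noncomputable def Zfac {m : ℕ} (r : Fin m → Bool) : ℝ :=
  Finset.univ.sup' Finset.univ_nonempty (fun σ : Equiv.Perm (Fin m) => dcg σ r)

/-- NDCG(σ,r) = DCG(σ,r)/Z(r) for r ≠ 0, with NDCG(σ,0) = 1 by convention. -/
noncomputable def ndcg {m : ℕ} (σ : Equiv.Perm (Fin m)) (r : Fin m → Bool) : ℝ :=
  if r = fun _ => false then 1 else dcg σ r / Zfac r

theorem discount_zero : discount 0 = 1 := by
  simp [discount]

theorem logb_natCast_add_two_pos (k : ℕ) : 0 < Real.logb 2 ((k : ℝ) + 2) :=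
  Real.logb_pos one_lt_two (by linarith [k.cast_nonneg (α := ℝ)])

theorem discount_pos (k : ℕ) : 0 < discount k :=
  inv_pos.2 (logb_natCast_add_two_pos k)

theorem discount_le_one (k : ℕ) : discount k ≤ 1 :=
  discount_zero ▸ discount_strictAnti.antitone k.zero_le

section Relevance

variable {m : ℕ}

/-- The relevance vector in which exactly the objects of `s` are relevant. -/
def relevance (s : Finset (Fin m)) : Fin m → Bool :=
  fun i => decide (i ∈ s)

theorem relevance_union (s t : Finset (Fin m)) :
    relevance (s ∪ t) = relevance s ⊔ relevance t := by
  ext i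
  simp [relevance]

theorem relevance_inter (s t : Finset (Fin m)) :
    relevance (s ∩ t) = relevance s ⊓ relevance t := by
  ext i
  simp [relevance]

theorem dcg_relevance (σ : Equiv.Perm (Fin m)) (s : Finset (Fin m)) :
    dcg σ (relevance s) = ∑ i ∈ s, discount (σ i) := by
  simp [dcg, relevance, discount, ite_div, Finset.sum_ite_mem]

theorem dcg_le_Zfac (σ : Equiv.Perm (Fin m)) (r : Fin m → Bool) : dcg σ r ≤ Zfac r :=
  Finset.le_sup' (fun σ => dcg σ r) (Finset.mem_univ σ)

theorem exists_discount_apply_eq_one (i : Fin m) :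
    ∃ σ : Equiv.Perm (Fin m), discount (σ i) = 1 :=
  ⟨Equiv.swap i ⟨0, i.pos⟩, by rw [Equiv.swap_apply_left, discount_zero]⟩

theorem Zfac_relevance_singleton (i : Fin m) : Zfac (relevance {i}) = 1 := by
  apply le_antisymm
  · refine Finset.sup'_le _ _ fun σ _ => ?_
    rw [dcg_relevance, Finset.sum_singleton]
    exact discount_le_one _
  · obtain ⟨σ, hσ⟩ := exists_discount_apply_eq_one i
    calc 1 = dcg σ (relevance {i}) := by rw [dcg_relevance, Finset.sum_singleton, hσ]
      _ ≤ Zfac (relevance {i}) := dcg_le_Zfac _ _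

theorem one_lt_Zfac_relevance {s : Finset (Fin m)} (hs : s.Nontrivial) :
    1 < Zfac (relevance s) := by
  obtain ⟨i, hi, j, hj, hij⟩ := hs
  obtain ⟨σ, hσ⟩ := exists_discount_apply_eq_one i
  calc 1 = discount (σ i) := hσ.symm
    _ < ∑ k ∈ s, discount (σ k) :=
      Finset.single_lt_sum (f := fun k => discount (σ k)) hij.symm hi hj (discount_pos _)
        fun _ _ _ => (discount_pos _).le
    _ = dcg σ (relevance s) := (dcg_relevance σ s).symm
    _ ≤ Zfac (relevance s) := dcg_le_Zfac _ _

theorem ndcg_sub_ndcg (σ τ : Equiv.Perm (Fin m)) (r : Fin m → Bool) :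
    ndcg σ r - ndcg τ r = (dcg σ r - dcg τ r) / Zfac r := by
  by_cases hr : r = fun _ => false
  · simp [ndcg, dcg, hr]
  · simp only [ndcg, if_neg hr, sub_div]

theorem ndcg_sub_ndcg_relevance (σ τ : Equiv.Perm (Fin m)) (s : Finset (Fin m)) :
    ndcg σ (relevance s) - ndcg τ (relevance s) =
      (∑ i ∈ s, (discount (σ i) - discount (τ i))) / Zfac (relevance s) := by
  rw [ndcg_sub_ndcg, dcg_relevance, dcg_relevance, Finset.sum_sub_distrib]

end Relevance

section Modularity

variable {m : ℕ}

theorem chi_sup_add_chi_inf (j : Fin m) (b : Bool) (r r' : Fin m → Bool) :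
    chi j b (r ⊔ r') + chi j b (r ⊓ r') = chi j b r + chi j b r' := by
  cases b <;> cases h : r j <;> cases h' : r' j <;> simp [chi, h, h']

theorem apply_sup_add_apply_inf_of_mem_span_chi {f : (Fin m → Bool) → ℝ}
    (hf : f ∈ Submodule.span ℝ (Set.range fun p : Fin m × Bool => chi p.1 p.2))
    (r r' : Fin m → Bool) :
    f (r ⊔ r') + f (r ⊓ r') = f r + f r' := by
  let evalAt (q : Fin m → Bool) : ((Fin m → Bool) → ℝ) →ₗ[ℝ] ℝ := LinearMap.proj q
  refine LinearMap.eqOn_span (f := evalAt (r ⊔ r') + evalAt (r ⊓ r'))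
    (g := evalAt r + evalAt r') ?_ hf
  rintro _ ⟨⟨j, b⟩, rfl⟩
  exact chi_sup_add_chi_inf j b r r'

end Modularity

theorem eq_zero_of_pairwise_add_eq_zero {ι M : Type*} [Fintype ι] [AddCommMonoid M]
    [IsAddTorsionFree M] (hι : 3 ≤ Fintype.card ι) {f : ι → M}
    (hf : Pairwise fun i j => f i + f j = 0) (i : ι) : f i = 0 := by
  classical
  obtain ⟨j, hj, k, hk, hjk⟩ : ((Finset.univ : Finset ι).erase i).Nontrivial := by
    rw [← Finset.one_lt_card_iff_nontrivial, Finset.card_erase_of_mem (Finset.mem_univ i),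
      Finset.card_univ]
    omega
  have hij : f i + f j = 0 := hf (Finset.ne_of_mem_erase hj).symm
  have hik : f i + f k = 0 := hf (Finset.ne_of_mem_erase hk).symm
  have two_nsmul_eq_zero : 2 • f i = 0 :=
    calc 2 • f i = f i + f i + (f j + f k) := by rw [hf hjk, add_zero, two_nsmul]
      _ = (f i + f j) + (f i + f k) := add_add_add_comm _ _ _ _
      _ = 0 := by rw [hij, hik, add_zero]
  exact (nsmul_eq_zero_iff_right two_ne_zero).1 two_nsmul_eq_zero

theorem discount_sub_add_discount_sub_eq_zero_of_mem_span_chi {m : ℕ}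
    {σ τ : Equiv.Perm (Fin m)}
    (h : (fun r => ndcg σ r - ndcg τ r) ∈
      Submodule.span ℝ (Set.range fun p : Fin m × Bool => chi p.1 p.2))
    {i j : Fin m} (hij : i ≠ j) :
    (discount (σ i) - discount (τ i)) + (discount (σ j) - discount (τ j)) = 0 := by
  have modular := apply_sup_add_apply_inf_of_mem_span_chi h (relevance {i}) (relevance {j})
  rw [← relevance_union, ← relevance_inter, ← Finset.insert_eq,
    Finset.singleton_inter_of_notMem (Finset.notMem_singleton.2 hij)] at modular
  simp only [ndcg_sub_ndcg_relevance, Finset.sum_pair hij, Finset.sum_singleton,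
    Finset.sum_empty, zero_div, add_zero, Zfac_relevance_singleton, div_one] at modular
  have one_lt_Z : 1 < Zfac (relevance {i, j}) :=
    one_lt_Zfac_relevance ⟨i, by simp, j, by simp, hij⟩
  by_contra hne
  rw [div_eq_iff (zero_lt_one.trans one_lt_Z).ne', left_eq_mul₀ hne] at modular
  exact one_lt_Z.ne' modular

theorem ndcg_global_observability_fails_general {m : ℕ} (hm : 3 ≤ m)
    {σ τ : Equiv.Perm (Fin m)} (hστ : σ ≠ τ) :
    (fun r : Fin m → Bool => ndcg σ r - ndcg τ r) ∉
      Submodule.span ℝ (Set.range fun p : Fin m × Bool => chi p.1 p.2) := by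
  intro hmem
  have discount_sub_eq_zero : ∀ i, discount (σ i) - discount (τ i) = 0 :=
    eq_zero_of_pairwise_add_eq_zero (by rwa [Fintype.card_fin]) fun _ _ hij =>
      discount_sub_add_discount_sub_eq_zero_of_mem_span_chi hmem hij
  exact hστ <| Equiv.ext fun i => Fin.ext <|
    discount_strictAnti.injective <| sub_eq_zero.1 <| discount_sub_eq_zero i

/-- Global observability fails for NDCG at m = 3: the gain difference between the identity
ranking σ₁ and the reversal ranking σ₆ (σ₆(i) = 4 − i, in Lean `Fin.revPerm`) does not lie
in the span of the columns χ_{j,b} of the transposed signal matrices. -/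
theorem ndcg_global_observability_fails :
    (fun r : Fin 3 → Bool => ndcg 1 r - ndcg Fin.revPerm r) ∉
      Submodule.span ℝ (Set.range fun p : Fin 3 × Bool => chi p.1 p.2) :=
  ndcg_global_observability_fails_general le_rfl (by decide)
end

section
/- (Global observability fails for MAP at m = 3.) Let m = 3, let σ_1 be the identity ranking and σ_6 the reversal ranking (σ_6(i) = 4 − i). Then the gain-difference function d : {0,1}^3 → ℝ, d(r) = MAP(σ_1,r) − MAP(σ_6,r), does NOT lie in the ℝ-linear span of the family {χ_{j,b} : j ∈ {1,2,3}, b ∈ {0,1}}, where χ_{j,b}(r) = 𝟙(r(j)=b). (Explicitly, d takes the value −2/3 at r=(0,0,1), −5/12 at r=(0,1,1), 2/3 at r=(1,0,0), 5/12 at r=(1,1,0), and 0 at the other four relevance vectors.) -/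
/-- MAP(σ,r) = (1/‖r‖₁)·Σ_{i=1}^m [(Σ_{j≤i} 𝟙(r(σ⁻¹(j))=1))/i]·𝟙(r(σ⁻¹(i))=1) for r ≠ 0,
with MAP(σ,0) = 1 by convention. Ranks are 0-indexed in Lean: the object at rank `i` is
`σ.symm i` and the division is by the 1-indexed rank `(i : ℕ) + 1`. -/
noncomputable def mapGain {m : ℕ} (σ : Equiv.Perm (Fin m)) (r : Fin m → Bool) : ℝ :=
  if r = fun _ => false then 1
  else
    (∑ i, if r i then (1 : ℝ) else 0)⁻¹ *
      ∑ i : Fin m,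
        ((∑ j : Fin m, if j ≤ i ∧ r (σ.symm j) = true then (1 : ℝ) else 0) /
            (((i : ℕ) : ℝ) + 1)) *
          (if r (σ.symm i) then 1 else 0)

/-!
Every column `chi j b` is a modular set function of the set of relevant objects, hence so is every
function in their span. MAP is not modular: for a pair of objects `a`, `b` the defect
`f {a, b} + f ∅ - f {a} - f {b}` equals `1 - 1 / (2 * p)`, where `p` is the better of their two
ranks, counted from 1. Two rankings that disagree on the better rank of some pair therefore have a
gain difference outside the span; the identity and the reversal of three objects disagree in this
way on the first two objects.
-/

section RelevantSet

variable {m : ℕ}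

/-- The relevance vector `r ∈ {0,1}^m` whose set of relevant objects is `S`. -/
def relevant (S : Finset (Fin m)) : Fin m → Bool := fun i => decide (i ∈ S)

@[simp]
theorem relevant_eq_true {S : Finset (Fin m)} {i : Fin m} : relevant S i = true ↔ i ∈ S :=
  decide_eq_true_iff

theorem relevant_ne_const_false {S : Finset (Fin m)} (hS : S.Nonempty) :
    relevant S ≠ fun _ => false := by
  obtain ⟨i, hi⟩ := hS
  intro h
  simpa [relevant, hi] using congrFun h i

theorem chi_relevant_union_add_inter (j : Fin m) (b : Bool) (S T : Finset (Fin m)) :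
    chi j b (relevant (S ∪ T)) + chi j b (relevant (S ∩ T)) =
      chi j b (relevant S) + chi j b (relevant T) := by
  by_cases hS : j ∈ S <;> by_cases hT : j ∈ T <;> cases b <;> simp [chi, relevant, hS, hT]

theorem relevant_union_add_inter_of_mem_span_chi {f : (Fin m → Bool) → ℝ}
    (hf : f ∈ Submodule.span ℝ (Set.range fun p : Fin m × Bool => chi p.1 p.2))
    (S T : Finset (Fin m)) :
    f (relevant (S ∪ T)) + f (relevant (S ∩ T)) = f (relevant S) + f (relevant T) := by
  induction hf using Submodule.span_induction with
  | mem f hf =>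
    obtain ⟨⟨j, b⟩, rfl⟩ := hf
    exact chi_relevant_union_add_inter j b S T
  | zero => simp
  | add f g _ _ hf hg =>
    simp only [Pi.add_apply]
    linear_combination hf + hg
  | smul c f _ hf =>
    simp only [Pi.smul_apply, smul_eq_mul]
    linear_combination c * hf

end RelevantSet

section Gain

variable {m : ℕ} (σ : Equiv.Perm (Fin m))

theorem mapGain_relevant_empty : mapGain σ (relevant ∅) = 1 :=
  if_pos (funext fun i => by simp [relevant])

theorem mapGain_relevant {S : Finset (Fin m)} (hS : S.Nonempty) :
    mapGain σ (relevant S) =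
      (S.card : ℝ)⁻¹ *
        ∑ i ∈ S, (({j ∈ S | σ j ≤ σ i} : Finset (Fin m)).card : ℝ) / ((σ i : ℕ) + 1) := by
  have relevant_up_to (i : Fin m) :
      (∑ k, if k ≤ σ i ∧ σ.symm k ∈ S then (1 : ℝ) else 0) =
        ({j ∈ S | σ j ≤ σ i} : Finset (Fin m)).card := by
    rw [← Equiv.sum_comp σ]
    simp [Finset.sum_boole, ← Finset.filter_filter, and_comm]
  rw [mapGain, if_neg (relevant_ne_const_false hS)]
  congr 1
  · simp
  · rw [← Equiv.sum_comp σ]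
    simp [relevant_up_to]

theorem mapGain_relevant_singleton (a : Fin m) :
    mapGain σ (relevant {a}) = 1 / ((σ a : ℕ) + 1) := by
  simp [mapGain_relevant, Finset.filter_singleton]

theorem mapGain_relevant_pair_of_lt {a b : Fin m} (hab : σ a < σ b) :
    mapGain σ (relevant {a, b}) =
      (1 / ((σ a : ℕ) + 1) + 2 / ((σ b : ℕ) + 1)) / 2 := by
  have hne : a ≠ b := fun h => hab.ne (congrArg σ h)
  rw [mapGain_relevant σ (Finset.insert_nonempty a {b}), Finset.sum_pair hne, Finset.card_pair hne]
  simp only [Finset.filter_insert, Finset.filter_singleton, le_refl, hab.le, hab.not_ge, ↓reduceIte,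
    insert_empty_eq, Finset.card_singleton, Finset.card_pair hne, Nat.cast_one, Nat.cast_ofNat]
  ring

theorem mapGain_relevant_pair {a b : Fin m} (hab : a ≠ b) :
    mapGain σ (relevant {a, b}) =
      mapGain σ (relevant {a}) + mapGain σ (relevant {b}) -
        1 / (2 * (((min (σ a) (σ b) : Fin m) : ℕ) + 1)) := by
  wlog hlt : σ a < σ b generalizing a b
  · have hgt : σ b < σ a := (σ.injective.ne hab.symm).lt_of_le (not_lt.mp hlt)
    rw [Finset.pair_comm, min_comm, this hab.symm hgt, add_comm (mapGain σ (relevant {b}))]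
  rw [mapGain_relevant_pair_of_lt σ hlt, mapGain_relevant_singleton, mapGain_relevant_singleton,
    min_eq_left hlt.le]
  field_simp
  ring

end Gain

theorem map_global_observability_fails_general {m : ℕ} {σ τ : Equiv.Perm (Fin m)} {a b : Fin m}
    (hab : a ≠ b) (hmin : min (σ a) (σ b) ≠ min (τ a) (τ b)) :
    (fun r : Fin m → Bool => mapGain σ r - mapGain τ r) ∉
      Submodule.span ℝ (Set.range fun p : Fin m × Bool => chi p.1 p.2) := by
  intro hspan
  have hmodular := relevant_union_add_inter_of_mem_span_chi hspan {a} {b}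
  rw [← Finset.insert_eq, Finset.singleton_inter_of_notMem (Finset.notMem_singleton.mpr hab)]
    at hmodular
  simp only [mapGain_relevant_empty, mapGain_relevant_pair _ hab] at hmodular
  have hdefect : 1 / (2 * (((min (σ a) (σ b) : Fin m) : ℕ) + 1 : ℝ)) =
      1 / (2 * (((min (τ a) (τ b) : Fin m) : ℕ) + 1)) := by
    linear_combination -hmodular
  have hranks : (((min (σ a) (σ b) : Fin m) : ℕ) : ℝ) = ((min (τ a) (τ b) : Fin m) : ℕ) := by
    simpa only [one_div, inv_inj, mul_eq_mul_left_iff, OfNat.ofNat_ne_zero, or_false,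
      add_left_inj] using hdefect
  exact hmin (Fin.val_injective (Nat.cast_injective hranks))

/-- Global observability fails for MAP at m = 3: the gain difference between the identity
ranking σ₁ and the reversal ranking σ₆ (σ₆(i) = 4 − i, in Lean `Fin.revPerm`) does not lie
in the span of the columns χ_{j,b} of the transposed signal matrices. -/
theorem map_global_observability_fails :
    (fun r : Fin 3 → Bool => mapGain 1 r - mapGain Fin.revPerm r) ∉
      Submodule.span ℝ (Set.range fun p : Fin 3 × Bool => chi p.1 p.2) :=
  map_global_observability_fails_general (a := 0) (b := 1) (by decide) (by decide)
end

section
/- (Global observability holds for AUC at m = 3.) Let m = 3. For every pair of rankings σ_a, σ_b of the three objects, the loss-difference function r ↦ AUC(σ_a,r) − AUC(σ_b,r) on {0,1}^3 lies in the ℝ-linear span of the family {χ_{j,b} : j ∈ {1,2,3}, b ∈ {0,1}}, where χ_{j,b}(r) = 𝟙(r(j)=b). (This holds because for m = 3 the normalizing factors N(r) agree for all relevance vectors with a nontrivial mixture of 0's and 1's.) -/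
/-- The AUC normalizing factor N(r) = (Σ_i r(i))·(m − Σ_i r(i)). -/
noncomputable def Nfac {m : ℕ} (r : Fin m → Bool) : ℝ :=
  (∑ i, if r i then (1 : ℝ) else 0) * ((m : ℝ) - ∑ i, if r i then (1 : ℝ) else 0)

/-- AUC(σ,r) = PL(σ,r)/N(r) when N(r) ≠ 0, and 0 by convention when N(r) = 0. -/
noncomputable def auc {m : ℕ} (σ : Equiv.Perm (Fin m)) (r : Fin m → Bool) : ℝ :=
  if Nfac r = 0 then 0 else pairwiseLoss σ r / Nfac r

/-! With ranks counted from `0` and relevance indicators `x j`, the pairwise loss of `σ` is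
`∑ j, σ j * x j - s * (s - 1) / 2`, where `s = ∑ j, x j`. Its nonlinear part does not depend on `σ`,
so differences of pairwise losses are linear in the indicators for every number of objects.
Dividing by the normalizing factor `s * (m - s)` preserves linearity as soon as this factor takes
at most one nonzero value, which happens for `m ≤ 3`. -/

section

open Finset

theorem two_mul_sum_sum_ite_lt_mul {ι α R : Type*} [Fintype ι] [LinearOrder α] [CommRing R]
    {f : ι → α} (hf : Function.Injective f) (x : ι → R) :
    2 * ∑ i, ∑ j, (if f i < f j then x i * x j else 0) = (∑ i, x i) ^ 2 - ∑ i, x i ^ 2 := by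
  classical
  have swap : ∑ i, ∑ j, (if f i < f j then x i * x j else 0) =
      ∑ i, ∑ j, (if f j < f i then x i * x j else 0) := by
    rw [sum_comm]
    simp only [mul_comm]
  have trichotomy (i j : ι) : (if f i < f j then x i * x j else 0) +
      (if f j < f i then x i * x j else 0) = x i * x j - if i = j then x i * x j else 0 := by
    rcases lt_trichotomy (f i) (f j) with h | h | h
    · simp [h, h.not_gt, ne_of_apply_ne f h.ne]
    · simp [hf h]
    · simp [h, h.not_gt, ne_of_apply_ne f h.ne']
  calc 2 * ∑ i, ∑ j, (if f i < f j then x i * x j else 0)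
      = ∑ i, ∑ j, ((if f i < f j then x i * x j else 0) +
          (if f j < f i then x i * x j else 0)) := by
        simp only [sum_add_distrib, ← swap, two_mul]
    _ = ∑ i, ∑ j, x i * x j - ∑ i, x i ^ 2 := by
        simp only [trichotomy, sum_sub_distrib, sum_ite_eq, mem_univ, if_true, pow_two]
    _ = (∑ i, x i) ^ 2 - ∑ i, x i ^ 2 := by rw [pow_two, sum_mul_sum]

variable {m : ℕ}

theorem sum_ite_perm_lt {R : Type*} [Semiring R] (σ : Equiv.Perm (Fin m)) (k : Fin m) :
    ∑ i, (if σ i < k then (1 : R) else 0) = (k : ℕ) := by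
  rw [Equiv.sum_comp σ fun i => if i < k then (1 : R) else 0, sum_boole, filter_gt_eq_Iio,
    Fin.card_Iio]

theorem chi_false (j : Fin m) (r : Fin m → Bool) : chi j false r = 1 - chi j true r := by
  cases h : r j <;> simp [chi, h]

theorem chi_sq (j : Fin m) (b : Bool) (r : Fin m → Bool) : chi j b r ^ 2 = chi j b r := by
  simp [chi]

theorem chi_nonneg (j : Fin m) (b : Bool) (r : Fin m → Bool) : 0 ≤ chi j b r := by
  unfold chi
  positivity

theorem pairwiseLoss_eq_sum_chi (σ : Equiv.Perm (Fin m)) (r : Fin m → Bool) :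
    pairwiseLoss σ r = ∑ i, ∑ j, if σ i < σ j then chi i false r * chi j true r else 0 := by
  simp only [pairwiseLoss, chi, ite_zero_mul_ite_zero, mul_one, ite_and]

theorem Nfac_eq_sum_chi (r : Fin m → Bool) :
    Nfac r = ∑ i, ∑ j, chi i false r * chi j true r := by
  simp only [← sum_mul_sum, chi_false, sum_sub_distrib, sum_const, card_univ, Fintype.card_fin,
    nsmul_eq_mul, mul_one]
  exact mul_comm _ _

theorem pairwiseLoss_nonneg (σ : Equiv.Perm (Fin m)) (r : Fin m → Bool) :
    0 ≤ pairwiseLoss σ r := by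
  unfold pairwiseLoss
  positivity

theorem pairwiseLoss_le_Nfac (σ : Equiv.Perm (Fin m)) (r : Fin m → Bool) :
    pairwiseLoss σ r ≤ Nfac r := by
  rw [pairwiseLoss_eq_sum_chi, Nfac_eq_sum_chi]
  refine sum_le_sum fun i _ => sum_le_sum fun j _ => ?_
  split_ifs
  · exact le_rfl
  · exact mul_nonneg (chi_nonneg i false r) (chi_nonneg j true r)

theorem pairwiseLoss_eq_sum_sub (σ : Equiv.Perm (Fin m)) (r : Fin m → Bool) :
    pairwiseLoss σ r = ∑ j, (σ j : ℕ) * chi j true r -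
      (∑ j, chi j true r) * (∑ j, chi j true r - 1) / 2 := by
  have linear_part : ∑ i, ∑ j, (if σ i < σ j then chi j true r else 0) =
      ∑ j, (σ j : ℕ) * chi j true r := by
    rw [sum_comm]
    simp only [← sum_ite_perm_lt σ, sum_mul, ite_mul, one_mul, zero_mul]
  have quadratic_part := two_mul_sum_sum_ite_lt_mul σ.injective fun j => chi j true r
  have expand : pairwiseLoss σ r = ∑ i, ∑ j, (if σ i < σ j then chi j true r else 0) -
      ∑ i, ∑ j, (if σ i < σ j then chi i true r * chi j true r else 0) := by
    simp only [pairwiseLoss_eq_sum_chi, chi_false, ← sum_sub_distrib, ite_sub_ite, sub_zero,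
      sub_mul, one_mul]
  simp only [chi_sq] at quadratic_part
  rw [expand, linear_part]
  linear_combination -quadratic_part / 2

theorem pairwiseLoss_sub_mem_span_chi (σ τ : Equiv.Perm (Fin m)) :
    (fun r => pairwiseLoss σ r - pairwiseLoss τ r) ∈
      Submodule.span ℝ (Set.range fun p : Fin m × Bool => chi p.1 p.2) := by
  have linear : (fun r => pairwiseLoss σ r - pairwiseLoss τ r) =
      ∑ j, ((σ j : ℕ) - (τ j : ℕ) : ℝ) • chi j true := by
    ext r
    simp only [pairwiseLoss_eq_sum_sub, sub_sub_sub_cancel_right, ← sum_sub_distrib, ← sub_mul,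
      Finset.sum_apply, Pi.smul_apply, smul_eq_mul]
  rw [linear]
  exact Submodule.sum_mem _ fun j _ =>
    Submodule.smul_mem _ _ (Submodule.subset_span ⟨(j, true), rfl⟩)

theorem auc_eq_pairwiseLoss_div {r : Fin m → Bool} {c : ℝ} (hc : Nfac r = 0 ∨ Nfac r = c)
    (σ : Equiv.Perm (Fin m)) : auc σ r = pairwiseLoss σ r / c := by
  by_cases h0 : Nfac r = 0
  · have loss_zero : pairwiseLoss σ r = 0 :=
      le_antisymm (h0 ▸ pairwiseLoss_le_Nfac σ r) (pairwiseLoss_nonneg σ r)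
    rw [auc, if_pos h0, loss_zero, zero_div]
  · rw [auc, if_neg h0, hc.resolve_left h0]

theorem Nfac_eq_zero_or_eq_sub_one (hm : m ≤ 3) (r : Fin m → Bool) :
    Nfac r = 0 ∨ Nfac r = m - 1 := by
  have count_le : #{i | r i = true} ≤ m := card_finset_fin_le _
  rw [Nfac, sum_boole]
  generalize #{i | r i = true} = s at count_le ⊢
  interval_cases m <;> interval_cases s <;> norm_num

theorem auc_global_observability_m3_general (hm : m ≤ 3) (σa σb : Equiv.Perm (Fin m)) :
    (fun r : Fin m → Bool => auc σa r - auc σb r) ∈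
      Submodule.span ℝ (Set.range fun p : Fin m × Bool => chi p.1 p.2) := by
  have scaled : (fun r : Fin m → Bool => auc σa r - auc σb r) =
      (m - 1 : ℝ)⁻¹ • fun r => pairwiseLoss σa r - pairwiseLoss σb r := by
    ext r
    simp only [auc_eq_pairwiseLoss_div (Nfac_eq_zero_or_eq_sub_one hm r), Pi.smul_apply,
      smul_eq_mul, div_eq_inv_mul, mul_sub]
  rw [scaled]
  exact Submodule.smul_mem _ _ (pairwiseLoss_sub_mem_span_chi σa σb)

end

/-- Global observability holds for AUC at m = 3: for every pair of rankings of the three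
objects, the loss-difference function lies in the span of the columns χ_{j,b} of the
transposed signal matrices. -/
theorem auc_global_observability_m3 (σa σb : Equiv.Perm (Fin 3)) :
    (fun r : Fin 3 → Bool => auc σa r - auc σb r) ∈
      Submodule.span ℝ (Set.range fun p : Fin 3 × Bool => chi p.1 p.2) :=
  auc_global_observability_m3_general le_rfl σa σb
end

section
/- (AUC is not of the form f(σ)·r.) For every m ≥ 2, there is no function f assigning to each ranking σ of m objects a vector f(σ) ∈ ℝ^m such that AUC(σ,r) = Σ_{i=1}^m f(σ)(i)·r(i) for all rankings σ and all binary relevance vectors r ∈ {0,1}^m. -/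
/-!
The AUC of the relevance vector that marks the single object `k` is the 0-based rank of `k` divided
by `m - 1`. If `AUC(σ, ·)` were linear, its value at the all-ones vector would be the sum of these
numbers, which is `m / 2` whatever `σ` is; but the all-ones vector has AUC `0` by convention.
-/

section AUC

variable {m : ℕ} (σ : Equiv.Perm (Fin m))

theorem auc_eq_div (r : Fin m → Bool) : auc σ r = pairwiseLoss σ r / Nfac r := by
  unfold auc
  split_ifs with hN
  · rw [hN, div_zero]
  · rfl

theorem Nfac_const_true : Nfac (fun _ : Fin m => true) = 0 := by
  simp [Nfac]

theorem auc_const_true : auc σ (fun _ => true) = 0 :=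
  if_pos Nfac_const_true

theorem Nfac_decide_eq (k : Fin m) : Nfac (fun i => decide (i = k)) = m - 1 := by
  simp [Nfac]

theorem pairwiseLoss_decide_eq (k : Fin m) :
    pairwiseLoss σ (fun i => decide (i = k)) = (σ k : ℕ) := by
  have inner_sum (i : Fin m) :
      (∑ j, if σ i < σ j ∧ decide (i = k) = false ∧ decide (j = k) = true then (1 : ℝ) else 0) =
        if σ i < σ k then 1 else 0 := by
    rw [Finset.sum_eq_single k (by simp +contextual) (by simp)]
    have : σ i < σ k → i ≠ k := fun h hik => h.ne (congrArg σ hik)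
    simpa using if_congr (and_iff_left_of_imp this) rfl rfl
  calc pairwiseLoss σ (fun i => decide (i = k))
      = ∑ i, if σ i < σ k then (1 : ℝ) else 0 := Finset.sum_congr rfl fun i _ => inner_sum i
    _ = ∑ a, if a < σ k then (1 : ℝ) else 0 := Equiv.sum_comp σ fun a => if a < σ k then 1 else 0
    _ = (σ k : ℕ) := by rw [Finset.sum_boole, Finset.filter_gt_eq_Iio, Fin.card_Iio]

theorem auc_decide_eq (k : Fin m) :
    auc σ (fun i => decide (i = k)) = (σ k : ℕ) / ((m : ℝ) - 1) := by
  rw [auc_eq_div, pairwiseLoss_decide_eq, Nfac_decide_eq]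

theorem sum_rank : ∑ k, ((σ k : ℕ) : ℝ) = m * (m - 1) / 2 := by
  rw [Equiv.sum_comp σ fun a => ((a : ℕ) : ℝ), Fin.sum_univ_eq_sum_range fun n => (n : ℝ),
    ← Nat.cast_sum, Finset.sum_range_id, ← Nat.choose_two_right, Nat.cast_choose_two]

theorem sum_auc_decide_eq (hm : m ≠ 1) :
    ∑ k, auc σ (fun i => decide (i = k)) = m / 2 := by
  have hm' : (m : ℝ) - 1 ≠ 0 := sub_ne_zero.2 (Nat.cast_ne_one.2 hm)
  simp only [auc_decide_eq]
  rw [← Finset.sum_div, sum_rank]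
  field_simp

theorem auc_not_linear_general (hm : 2 ≤ m) :
    ¬∃ v : Fin m → ℝ, ∀ r : Fin m → Bool, auc σ r = ∑ i, v i * (if r i then 1 else 0) := by
  rintro ⟨v, hv⟩
  have v_eq (k : Fin m) : v k = auc σ (fun i => decide (i = k)) := by simp [hv]
  have half_eq_zero : (m : ℝ) / 2 = 0 := calc
    (m : ℝ) / 2 = ∑ k, v k := by simp only [v_eq, sum_auc_decide_eq σ (by lia : m ≠ 1)]
    _ = auc σ (fun _ => true) := by simp [hv]
    _ = 0 := auc_const_true σ
  have : (m : ℝ) ≠ 0 := Nat.cast_ne_zero.2 (by lia)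
  exact div_ne_zero this two_ne_zero half_eq_zero

end AUC

/-- AUC is not of the form f(σ)·r: for m ≥ 2 there is no assignment of a vector
`f σ ∈ ℝ^m` to each ranking σ with AUC(σ,r) = Σ_i f(σ)(i)·r(i) for all σ and all binary
relevance vectors r. -/
theorem auc_not_linear (m : ℕ) (hm : 2 ≤ m) :
    ¬∃ f : Equiv.Perm (Fin m) → (Fin m → ℝ),
      ∀ (σ : Equiv.Perm (Fin m)) (r : Fin m → Bool),
        auc σ r = ∑ i, f σ i * (if r i then 1 else 0) := by
  rintro ⟨f, hf⟩
  exact auc_not_linear_general 1 hm ⟨f 1, hf 1⟩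
end
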